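/- Let P be a shift-invariant measure on A^ℕ and K even. The strict inequality (1/K) H(P_K) > (1/2)((2/K) H(P_{K/2}) + h(P)) holds if and only if there exists n with K/2 < n ≤ K such that H(P_n) − H(P_{n−1}) > h(P); in particular the inequality holds whenever P is not a Markov measure of order ≤ K. -/

import Mathlib

open MeasureTheory Filter Finset

noncomputable section

variable {A : Type*}

def shift (x : ℕ → A) : ℕ → A := fun n => x (n + 1)

def cyl (x : ℕ → A) (n : ℕ) : Set (ℕ → A) := {y | ∀ i < n, y i = x i}

variable [MeasurableSpace A]

def Zf (P : Measure (ℕ → A)) (n : ℕ) (x : ℕ → A) : ℝ :=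
  (P (cyl (shift x) (n - 1))).toReal / (P (cyl x n)).toReal

def suppP (P : Measure (ℕ → A)) : Set (ℕ → A) := {x | ∀ n, 0 < P (cyl x n)}

def cylW {n : ℕ} (w : Fin n → A) : Set (ℕ → A) := {y | ∀ i : Fin n, y i.val = w i}

def Hn [Fintype A] (P : Measure (ℕ → A)) (n : ℕ) : ℝ :=
  ∑ w : Fin n → A, Real.negMulLog ((P (cylW w)).toReal)

def coordFiltration (A : Type*) [MeasurableSpace A] :
    Filtration ℕ (MeasurableSpace.pi : MeasurableSpace (ℕ → A)) where
  seq n := MeasurableSpace.comap (fun x : ℕ → A => fun i : Fin (n + 1) => x i) MeasurableSpace.pi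
  mono' := by
    intro m n hmn
    have h : (fun x : ℕ → A => fun i : Fin (m + 1) => x i)
        = (fun v : Fin (n + 1) → A => fun i : Fin (m + 1) => v (Fin.castLE (by omega) i))
          ∘ (fun x : ℕ → A => fun i : Fin (n + 1) => x i) := rfl
    show MeasurableSpace.comap _ _ ≤ MeasurableSpace.comap _ _
    rw [h, ← MeasurableSpace.comap_comp]
    exact MeasurableSpace.comap_mono
      ((measurable_pi_lambda _ (fun i => measurable_pi_apply _)).comap_le)
  le' := by
    intro n
    exact (measurable_pi_lambda _ (fun i => measurable_pi_apply i.val)).comap_le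

/-- `P` is a Markov measure of order `≤ m`: conditionally on the last `m` symbols,
the next symbol is independent of the more remote past (cross-multiplied form). -/
def IsMarkovOrderLe (P : Measure (ℕ → A)) (m : ℕ) : Prop :=
  ∀ x : ℕ → A, ∀ n : ℕ, m ≤ n →
    P (cyl x (n + 1)) * P (cyl (shift^[n - m] x) m)
      = P (cyl x n) * P (cyl (shift^[n - m] x) (m + 1))


lemma gap_nonneg {f p q s : ℝ} (hf : 0 ≤ f) (hfp : f ≤ p) (hfq : f ≤ q) (hs : 0 < s) :
    0 ≤ f * (Real.log f + Real.log s - Real.log p - Real.log q) - (f - p * q / s) ∧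
    (f * (Real.log f + Real.log s - Real.log p - Real.log q) - (f - p * q / s) = 0 →
      f * s = p * q) := by
  rcases hf.eq_or_lt with h0 | h0
  · subst h0
    have : 0 ≤ p * q / s := by positivity
    refine ⟨by linarith, fun h => ?_⟩
    have h2 : p * q / s = 0 := by linarith
    rcases div_eq_zero_iff.1 h2 with h3 | h3
    · rw [h3]; ring
    · exact absurd h3 hs.ne'
  · have hp : 0 < p := by linarith
    have hq : 0 < q := by linarith
    set x := p * q / (f * s) with hx
    have hxp : 0 < x := by positivity
    have hl : Real.log f + Real.log s - Real.log p - Real.log q = - Real.log x := by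
      rw [hx, Real.log_div (by positivity) (by positivity), Real.log_mul hp.ne' hq.ne',
        Real.log_mul h0.ne' hs.ne']; ring
    have he : p * q / s = f * x := by rw [hx]; field_simp
    rw [hl, he]
    have h1 := Real.log_le_sub_one_of_pos hxp
    have e : f * -Real.log x - (f - f * x) = f * (x - 1 - Real.log x) := by ring
    rw [e]
    refine ⟨mul_nonneg hf (by linarith), fun h => ?_⟩
    by_contra hne
    have hx1 : x ≠ 1 := by
      intro h1
      rw [hx, div_eq_one_iff_eq (by positivity)] at h1
      exact hne h1.symm
    have h2 := Real.log_lt_sub_one_of_pos hxp hx1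
    have : 0 < f * (x - 1 - Real.log x) := mul_pos h0 (by linarith)
    linarith

lemma cond_mi {A : Type*} [Fintype A] (f : A → A → ℝ) (hf : ∀ a b, 0 ≤ f a b) (p q : A → ℝ) (s : ℝ)
    (hp : ∀ a, ∑ b, f a b = p a) (hq : ∀ b, ∑ a, f a b = q b) (hs : ∑ a, p a = s)
    (hs' : ∑ b, q b = s) :
    (∑ a, ∑ b, Real.negMulLog (f a b)) + Real.negMulLog s ≤
      (∑ a, Real.negMulLog (p a)) + ∑ b, Real.negMulLog (q b) ∧
    ((∑ a, ∑ b, Real.negMulLog (f a b)) + Real.negMulLog s =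
      (∑ a, Real.negMulLog (p a)) + ∑ b, Real.negMulLog (q b) → ∀ a b, f a b * s = p a * q b) := by
  have hp0 : ∀ a, 0 ≤ p a := fun a => hp a ▸ Finset.sum_nonneg fun b _ => hf a b
  have hq0 : ∀ a, 0 ≤ q a := fun a => hq a ▸ Finset.sum_nonneg fun b _ => hf b a
  have hfp : ∀ a b, f a b ≤ p a := fun a b => by
    rw [← hp a]; exact Finset.single_le_sum (fun b _ => hf a b) (Finset.mem_univ b)
  have hfq : ∀ a b, f a b ≤ q b := fun a b => by
    rw [← hq b]; exact Finset.single_le_sum (f := fun a => f a b) (fun a _ => hf a b) (Finset.mem_univ a)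
  have hps : ∀ a, p a ≤ s := fun a => by
    rw [← hs]; exact Finset.single_le_sum (fun b _ => hp0 b) (Finset.mem_univ a)
  have hqs : ∀ a, q a ≤ s := fun a => by
    rw [← hs']; exact Finset.single_le_sum (fun b _ => hq0 b) (Finset.mem_univ a)
  have hs0 : 0 ≤ s := hs ▸ Finset.sum_nonneg fun b _ => hp0 b
  rcases hs0.eq_or_lt with h0 | h0
  · subst h0
    have p0 : ∀ a, p a = 0 := fun a => le_antisymm (hps a) (hp0 a)
    have q0 : ∀ a, q a = 0 := fun a => le_antisymm (hqs a) (hq0 a)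
    have f0 : ∀ a b, f a b = 0 := fun a b => le_antisymm ((hfp a b).trans (p0 a).le) (hf a b)
    simp [p0, q0, f0]
  · set g : A → A → ℝ := fun a b =>
      f a b * (Real.log (f a b) + Real.log s - Real.log (p a) - Real.log (q b)) - (f a b - p a * q b / s) with hg
    have hgg : ∀ a b, 0 ≤ g a b ∧ (g a b = 0 → f a b * s = p a * q b) := fun a b =>
      gap_nonneg (hf a b) (hfp a b) (hfq a b) h0
    have e1 : ∑ a, ∑ b, f a b * Real.log s = s * Real.log s := by
      simp_rw [← Finset.sum_mul, hp, hs]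
    have e2 : ∑ a, ∑ b, f a b * Real.log (p a) = ∑ a, p a * Real.log (p a) := by
      simp_rw [← Finset.sum_mul, hp]
    have e3 : ∑ a, ∑ b, f a b * Real.log (q b) = ∑ a, q a * Real.log (q a) := by
      rw [Finset.sum_comm]; simp_rw [← Finset.sum_mul, hq]
    have e4 : ∑ a, ∑ b, f a b = s := by simp_rw [hp, hs]
    have e5 : ∑ a, ∑ b, p a * q b / s = s := by
      simp_rw [← Finset.sum_div, ← Finset.mul_sum, hs', ← Finset.sum_mul, hs]
      field_simp
    have key : ∑ a, ∑ b, g a b = ((∑ a, Real.negMulLog (p a)) + ∑ b, Real.negMulLog (q b)) -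
        ((∑ a, ∑ b, Real.negMulLog (f a b)) + Real.negMulLog s) := by
      simp only [hg, mul_sub, mul_add, Finset.sum_sub_distrib, Finset.sum_add_distrib, e1, e2, e3, e4, e5,
        Real.negMulLog, neg_mul, Finset.sum_neg_distrib]
      ring
    have hn : 0 ≤ ∑ a, ∑ b, g a b := Finset.sum_nonneg fun a _ => Finset.sum_nonneg fun b _ => (hgg a b).1
    refine ⟨by linarith, fun h a b => (hgg a b).2 ?_⟩
    have hz : ∑ a, ∑ b, g a b = 0 := by linarith
    rw [Finset.sum_eq_zero_iff_of_nonneg (fun a _ => Finset.sum_nonneg fun b _ => (hgg a b).1)] at hz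
    have := hz a (Finset.mem_univ a)
    rw [Finset.sum_eq_zero_iff_of_nonneg (fun b _ => (hgg a b).1)] at this
    exact this b (Finset.mem_univ b)

lemma sum_cons {A : Type*} [Fintype A] (n : ℕ) (F : (Fin (n+1) → A) → ℝ) :
    ∑ w, F w = ∑ w : Fin n → A, ∑ a, F (Fin.cons a w) := by
  rw [← (Fin.consEquiv (fun _ : Fin (n+1) => A)).sum_comp, Fintype.sum_prod_type, Finset.sum_comm]
  rfl

lemma sum_snoc {A : Type*} [Fintype A] (n : ℕ) (F : (Fin (n+1) → A) → ℝ) :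
    ∑ w, F w = ∑ w : Fin n → A, ∑ a, F (Fin.snoc w a) := by
  rw [← (Fin.snocEquiv (fun _ : Fin (n+1) => A)).sum_comp, Fintype.sum_prod_type, Finset.sum_comm]
  rfl

lemma sum_cons_snoc {A : Type*} [Fintype A] (n : ℕ) (F : (Fin (n+2) → A) → ℝ) :
    ∑ w, F w = ∑ w : Fin n → A, ∑ a, ∑ b, F (Fin.snoc (Fin.cons a w : Fin (n+1) → A) b) := by
  rw [sum_snoc, _root_.sum_cons]

/-- Consistent stationary family of word masses. -/
structure Consist {A : Type*} [Fintype A] (u : ∀ n, (Fin n → A) → ℝ) : Prop where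
  nonneg : ∀ n w, 0 ≤ u n w
  right : ∀ n w, ∑ a, u (n+1) (Fin.snoc w a) = u n w
  left : ∀ n w, ∑ a, u (n+1) (Fin.cons a w) = u n w

def HH {A : Type*} [Fintype A] (u : ∀ n, (Fin n → A) → ℝ) (n : ℕ) : ℝ :=
  ∑ w, Real.negMulLog (u n w)

lemma HH_step {A : Type*} [Fintype A] {u : ∀ n, (Fin n → A) → ℝ} (hu : Consist u) (n : ℕ) :
    HH u (n+2) + HH u n ≤ HH u (n+1) + HH u (n+1) ∧
    (HH u (n+2) + HH u n = HH u (n+1) + HH u (n+1) → ∀ (w : Fin n → A) a b,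
      u (n+2) (Fin.snoc (Fin.cons a w : Fin (n+1) → A) b) * u n w =
        u (n+1) (Fin.cons a w) * u (n+1) (Fin.snoc w b)) := by
  have key := fun w : Fin n → A => cond_mi
    (fun a b => u (n+2) (Fin.snoc (Fin.cons a w : Fin (n+1) → A) b))
    (fun a b => hu.nonneg _ _) (fun a => u (n+1) (Fin.cons a w)) (fun b => u (n+1) (Fin.snoc w b)) (u n w)
    (fun a => hu.right _ _) (fun b => by simp_rw [← Fin.cons_snoc_eq_snoc_cons]; exact hu.left _ _)
    (hu.left _ _) (hu.right _ _)
  have e1 : HH u (n+2) + HH u n = ∑ w : Fin n → A,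
      ((∑ a, ∑ b, Real.negMulLog (u (n+2) (Fin.snoc (Fin.cons a w : Fin (n+1) → A) b))) +
        Real.negMulLog (u n w)) := by
    rw [Finset.sum_add_distrib, HH, HH, sum_cons_snoc]
  have e2 : HH u (n+1) + HH u (n+1) = ∑ w : Fin n → A,
      ((∑ a, Real.negMulLog (u (n+1) (Fin.cons a w))) +
        ∑ b, Real.negMulLog (u (n+1) (Fin.snoc w b))) := by
    rw [Finset.sum_add_distrib, ← _root_.sum_cons n (fun w => Real.negMulLog (u (n+1) w)),
      ← sum_snoc n (fun w => Real.negMulLog (u (n+1) w))]; rfl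
  rw [e1, e2]
  refine ⟨Finset.sum_le_sum fun w _ => (key w).1, fun h w => (key w).2 ?_⟩
  exact (Finset.sum_eq_sum_iff_of_le (fun w _ => (key w).1)).1 h w (Finset.mem_univ w)

lemma incr_ge (H : ℕ → ℝ) (h : ℝ) (hs : ∀ n, H (n+2) + H n ≤ H (n+1) + H (n+1))
    (hlim : Tendsto (fun n : ℕ => H n / n) atTop (nhds h)) (N : ℕ) : h ≤ H (N+1) - H N := by
  have mono : Antitone (fun n => H (n+1) - H n) := antitone_nat_of_succ_le fun n => by
    have := hs n
    show H (n+2) - H (n+1) ≤ _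
    linarith
  set b := H (N+1) - H N with hb
  have hle : ∀ k : ℕ, H (N + k) ≤ H N + k * b := by
    intro k
    induction k with
    | zero => simp
    | succ k ih =>
      have := mono (Nat.le_add_right N k)
      simp only at this
      push_cast
      rw [← add_assoc]
      linarith
  have hl2 : Tendsto (fun n : ℕ => (H N - N * b) / (n:ℝ) + b) atTop (nhds (0 + b)) :=
    (tendsto_const_div_atTop_nhds_zero_nat _).add tendsto_const_nhds
  rw [zero_add] at hl2
  refine le_of_tendsto_of_tendsto hlim hl2 ?_
  filter_upwards [eventually_ge_atTop (N+1)] with n hn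
  have hn0 : (0:ℝ) < n := by exact_mod_cast (by omega : 0 < n)
  obtain ⟨k, rfl⟩ := Nat.exists_eq_add_of_le (by omega : N ≤ n)
  have := hle k
  rw [div_add' _ _ _ hn0.ne']
  gcongr
  push_cast
  linarith

lemma incr_main (H : ℕ → ℝ) (h : ℝ) (hs : ∀ n, H (n+2) + H n ≤ H (n+1) + H (n+1))
    (hlim : Tendsto (fun n : ℕ => H n / n) atTop (nhds h)) (K : ℕ) (hK : 0 < K) (hKe : Even K) :
    (((2 / (K : ℝ)) * H (K / 2) + h) / 2 < H K / K ↔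
      ∃ n : ℕ, K / 2 < n ∧ n ≤ K ∧ h < H n - H (n - 1)) := by
  have hge := incr_ge H h hs hlim
  obtain ⟨m, rfl⟩ := hKe
  have hm : 0 < m := by omega
  have hm2 : (m + m) / 2 = m := by omega
  have hmr : (0:ℝ) < m := by exact_mod_cast hm
  rw [hm2]
  have e : ((2 / ((m + m : ℕ) : ℝ)) * H m + h) / 2 < H (m+m) / ((m + m : ℕ) : ℝ) ↔
      0 < H (m+m) - H m - m * h := by
    push_cast
    rw [lt_div_iff₀ (by positivity)]
    have : (2 / ((m:ℝ)+m) * H m + h) / 2 * (m+m) = H m + m * h := by field_simp; ring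
    rw [this]
    constructor <;> intro <;> linarith
  rw [e]
  have hsum : H (m+m) - H m - m * h = ∑ i ∈ Finset.range m, (H (m + i + 1) - H (m + i) - h) := by
    simp_rw [add_assoc m]
    rw [Finset.sum_sub_distrib, Finset.sum_range_sub (fun i => H (m+i))]
    simp
  rw [hsum]
  constructor
  · intro hpos
    obtain ⟨i, hi, hlt⟩ := Finset.exists_lt_of_sum_lt (s := Finset.range m) (f := fun _ => (0:ℝ)) (g := fun i => H (m + i + 1) - H (m + i) - h) (by rw [Finset.sum_const_zero]; exact hpos)
    rw [Finset.mem_range] at hi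
    refine ⟨m + i + 1, by omega, by omega, ?_⟩
    simp only [Nat.add_sub_cancel]
    linarith
  · rintro ⟨n, h1, h2, h3⟩
    refine Finset.sum_pos' (fun i _ => by linarith [hge (m+i)]) ⟨n - 1 - m, by simp; omega, ?_⟩
    have a1 : m + (n - 1 - m) = n - 1 := by omega
    have a2 : n - 1 + 1 = n := by omega
    rw [a1, a2]; linarith

lemma markov_abs {A : Type*} [Fintype A] {u : ∀ n, (Fin n → A) → ℝ} (hu : Consist u)
    (h : ℝ) (hlim : Tendsto (fun n : ℕ => HH u n / n) atTop (nhds h)) (K : ℕ) (hK : 0 < K)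
    (hle : HH u K - HH u (K-1) ≤ h) (x : ℕ → A) (n : ℕ) (hn : K ≤ n) :
    u (n+1) (fun i => x i) * u K (fun i => shift^[n-K] x i) =
      u n (fun i => x i) * u (K+1) (fun i => shift^[n-K] x i) := by
  have hs := fun n => (HH_step hu n).1
  have hge := incr_ge _ h hs hlim
  have hb : ∀ k, K - 1 ≤ k → HH u (k+1) - HH u k = h := by
    intro k hk
    induction k, hk using Nat.le_induction with
    | base => rw [Nat.sub_add_cancel hK]; exact le_antisymm hle (by simpa [Nat.sub_add_cancel hK] using hge (K-1))
    | succ k _ ih => 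
      have := hge (k+1)
      have := hs k
      show HH u (k+2) - _ = _
      refine le_antisymm ?_ ?_ <;> linarith [hge (k+1)]
  have hci : ∀ k, K - 1 ≤ k → ∀ (w : Fin k → A) a b,
      u (k+2) (Fin.snoc (Fin.cons a w : Fin (k+1) → A) b) * u k w =
        u (k+1) (Fin.cons a w) * u (k+1) (Fin.snoc w b) := fun k hk => (HH_step hu k).2 (by
      have := hb k hk
      have h2 : HH u (k+2) - HH u (k+1) = h := hb (k+1) (by omega)
      linarith)
  have e1 : ∀ (x : ℕ → A) k, (fun i : Fin (k+1) => x i) = Fin.cons (x 0) (fun i : Fin k => shift x i) := by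
    intro x k; ext i; refine Fin.cases ?_ (fun i => ?_) i <;> simp [shift]
  have e2 : ∀ (x : ℕ → A) k, (fun i : Fin (k+1) => x i) = Fin.snoc (fun i : Fin k => x i) (x k) := by
    intro x k; ext i; refine Fin.lastCases ?_ (fun i => ?_) i <;> simp
  induction n, hn using Nat.le_induction generalizing x with
  | base => simp [mul_comm]
  | succ n hn ih =>
    have ih' := ih (shift x)
    have e3 : shift^[n + 1 - K] x = shift^[n-K] (shift x) := by
      rw [Nat.succ_sub hn]; rfl
    rw [e3]
    set t := u K (fun i => shift^[n-K] (shift x) i)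
    set t' := u (K+1) (fun i => shift^[n-K] (shift x) i)
    have hc := hci n (by omega) (fun i => shift x i) (x 0) (shift x n)
    rw [← e1, ← e2] at hc
    have e4 : shift x n = x (n+1) := rfl
    rw [e4, ← e2] at hc
    by_cases h0 : u n (fun i : Fin n => shift x i) = 0
    · have z1 : u (n+1) (fun i => x i) = 0 := by
        have := hu.left n (fun i => shift x i)
        rw [h0, Finset.sum_eq_zero_iff_of_nonneg (fun a _ => hu.nonneg _ _)] at this
        rw [e1]; exact this _ (Finset.mem_univ _)
      have z2 : u (n+1+1) (fun i => x i) = 0 := by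
        have := hu.right (n+1) (fun i => x i)
        rw [z1, Finset.sum_eq_zero_iff_of_nonneg (fun a _ => hu.nonneg _ _)] at this
        rw [e2]; exact this _ (Finset.mem_univ _)
      rw [z1, z2]; simp
    · apply mul_right_cancel₀ h0
      have hc' : u (n+1+1) (fun i => x i) * u n (fun i => shift x i) =
        u (n+1) (fun i => x i) * u (n+1) (fun i => shift x i) := hc
      linear_combination t * hc' + u (n+1) (fun i => x i) * ih'


def Vw {n : ℕ} (w : Fin n → A) : Set (ℕ → A) := {y | ∀ i : Fin n, y i.val ∈ measurableAtom (w i)}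

lemma atom_symm {a b : A} (h : a ∈ measurableAtom b) : b ∈ measurableAtom a := by
  rw [measurableAtom_eq_of_mem h]; exact mem_measurableAtom_self b

lemma sat_meas {S : Set (ℕ → A)} (hS : MeasurableSet S) {y z : ℕ → A}
    (hyz : ∀ i, z i ∈ measurableAtom (y i)) (hy : y ∈ S) : z ∈ S := by
  have hg : @Measurable Bool (ℕ → A) ⊥ _ (fun b => if b then y else z) := by
    refine @measurable_pi_lambda _ _ _ ⊥ _ _ (fun i => ?_)
    intro T hT
    rw [MeasurableSpace.measurableSet_bot_iff]
    by_cases h : y i ∈ T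
    · right
      have hz := mem_of_mem_measurableAtom (hyz i) hT h
      ext b; cases b <;> simp [h, hz]
    · left
      have hz : z i ∉ T := fun hz => h (mem_of_mem_measurableAtom (atom_symm (hyz i)) hT hz)
      ext b; cases b <;> simp [h, hz]
  have h1 := hg hS
  rw [MeasurableSpace.measurableSet_bot_iff] at h1
  have ht : true ∈ ((fun b => if b then y else z) ⁻¹' S : Set Bool) := by simpa using hy
  rcases h1 with h1 | h1
  · rw [h1] at ht; exact absurd ht (by simp)
  · have : false ∈ ((fun b => if b then y else z) ⁻¹' S : Set Bool) := by rw [h1]; trivial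
    simpa using this

lemma meas_coord [Countable A] (i : ℕ) (S : Set A) (hS : MeasurableSet S) :
    MeasurableSet {y : ℕ → A | y i ∈ S} := measurable_pi_apply i hS

lemma Vw_meas [Countable A] {n : ℕ} (w : Fin n → A) : MeasurableSet (Vw w) := by
  have : Vw w = ⋂ i : Fin n, {y : ℕ → A | y i ∈ measurableAtom (w i)} := by
    ext y; simp [Vw]
  rw [this]
  exact MeasurableSet.iInter fun i => meas_coord _ _ (MeasurableSet.measurableAtom_of_countable _)

lemma cylW_eq [Countable A] (P : Measure (ℕ → A)) {n : ℕ} (w : Fin n → A) :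
    P (cylW w) = P (Vw w) := by
  apply le_antisymm
  · refine measure_mono fun y hy i => ?_
    rw [hy i]; exact mem_measurableAtom_self _
  · rw [← measure_toMeasurable (cylW w)]
    refine measure_mono fun z hz => ?_
    have hmem : (fun i => if h : i < n then w ⟨i, h⟩ else z i) ∈ toMeasurable P (cylW w) :=
      subset_toMeasurable _ _ (fun i => by simp)
    refine sat_meas (measurableSet_toMeasurable _ _) (fun i => ?_) hmem
    by_cases h : i < n
    · simpa [h] using hz ⟨i, h⟩
    · simp [h]

lemma cyl_eq (x : ℕ → A) (n : ℕ) : cyl x n = cylW (fun i : Fin n => x i) := by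
  ext y; simp [cyl, cylW, Fin.forall_iff]

lemma coord_inv [Countable A] {P : Measure (ℕ → A)}
    (hinv : MeasurePreserving (shift : (ℕ → A) → (ℕ → A)) P P) {S : Set A} (hS : MeasurableSet S)
    (i : ℕ) : P {y | y i ∈ S} = P {y | y 0 ∈ S} := by
  induction i with
  | zero => rfl
  | succ i ih =>
    rw [← ih, ← hinv.measure_preimage (meas_coord i S hS).nullMeasurableSet]
    rfl

section
open Classical in
def cc [Fintype A] (a : A) : ℕ := (Finset.univ.filter (fun b => a ∈ measurableAtom b)).card

def DD (A : Type*) [MeasurableSpace A] [Fintype A] : Set A := {a | 2 ≤ cc a}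

lemma cc_congr [Fintype A] {a b : A} (h : a ∈ measurableAtom b) : cc a = cc b := by
  unfold cc
  congr 1
  ext c
  simp only [Finset.mem_filter, Finset.mem_univ, true_and]
  constructor
  · intro h2
    rw [← measurableAtom_eq_of_mem h2]; exact atom_symm h
  · intro h2
    rw [← measurableAtom_eq_of_mem h2]; exact h

lemma cc_pos [Fintype A] (a : A) : 1 ≤ cc a :=
  Finset.card_pos.2 ⟨a, by simp⟩

lemma DD_meas [Fintype A] : MeasurableSet (DD A) := by
  have : DD A = ⋃ a ∈ DD A, measurableAtom a := by
    ext b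
    simp only [Set.mem_iUnion, exists_prop]
    constructor
    · intro h; exact ⟨b, h, mem_measurableAtom_self b⟩
    · rintro ⟨a, h1, h2⟩
      show 2 ≤ cc b
      rw [cc_congr h2]; exact h1
  rw [this]
  exact MeasurableSet.biUnion (Set.to_countable _) fun a _ => MeasurableSet.measurableAtom_of_countable a

lemma sum_atom [Fintype A] {b : A} (hb : b ∉ DD A) :
    ∑ a, (measurableAtom a).indicator (1 : A → ℝ) b = 1 := by
  classical
  have h1 : cc b = 1 := by
    have := cc_pos b
    have h2 : ¬ 2 ≤ cc b := hb
    omega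
  have : ∑ a, (measurableAtom a).indicator (1 : A → ℝ) b = (cc b : ℝ) := by
    unfold cc
    rw [Finset.card_filter]
    push_cast
    refine Finset.sum_congr rfl fun a _ => ?_
    simp [Set.indicator_apply]
  rw [this, h1]; simp

lemma sum_words_ge [Fintype A] (n : ℕ) (y : ℕ → A) (m : ℝ) :
    m * (∑ i : Fin n, {y : ℕ → A | y i ∈ DD A}.indicator (1 : (ℕ → A) → ℝ) y) - m ^ 2 / 2 ≤
      ∑ w : Fin n → A, (Vw w).indicator (1 : (ℕ → A) → ℝ) y := by
  classical
  set N := (Finset.univ.filter (fun i : Fin n => y i ∈ DD A)).card with hN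
  have e1 : (∑ i : Fin n, {y : ℕ → A | y i ∈ DD A}.indicator (1 : (ℕ → A) → ℝ) y) = N := by
    rw [hN, Finset.card_filter]
    push_cast
    refine Finset.sum_congr rfl fun a _ => ?_
    simp [Set.indicator_apply]
  have e2 : ∑ w : Fin n → A, (Vw w).indicator (1 : (ℕ → A) → ℝ) y = ((∏ i : Fin n, cc (y i) : ℕ) : ℝ) := by
    unfold cc
    rw [← Fintype.card_piFinset]
    have : Fintype.piFinset (fun i : Fin n => Finset.univ.filter (fun b => y i ∈ measurableAtom b)) =
      Finset.univ.filter (fun w : Fin n → A => y ∈ Vw w) := by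
      ext w
      simp only [Fintype.mem_piFinset, Finset.mem_filter, Finset.mem_univ, true_and]
      rfl
    have h2 : ((Finset.univ.filter (fun w : Fin n → A => y ∈ Vw w)).card : ℝ) =
      ∑ w : Fin n → A, (Vw w).indicator (1 : (ℕ → A) → ℝ) y := by
      rw [Finset.card_filter]
      push_cast
      refine Finset.sum_congr rfl fun a _ => ?_
      simp [Set.indicator_apply]
    rw [← h2, ← this]
  have e3 : 2 ^ N ≤ ∏ i : Fin n, cc (y i) := by
    have : 2 ^ N = ∏ i : Fin n, (if y i ∈ DD A then 2 else 1) := by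
      rw [Finset.prod_ite]; simp [hN]
    rw [this]
    refine Finset.prod_le_prod' fun i _ => ?_
    split_ifs with h
    · exact h
    · exact cc_pos _
  have e4 : ∀ k : ℕ, k ^ 2 ≤ 2 * 2 ^ k := by
    intro k
    induction k with
    | zero => simp
    | succ k ih =>
      have := Nat.lt_two_pow_self (n := k)
      rw [pow_succ 2 k]
      nlinarith
  rw [e1, e2]
  have e5 : ((N:ℝ)) ^ 2 ≤ 2 * ((∏ i : Fin n, cc (y i) : ℕ) : ℝ) := by
    exact_mod_cast (e4 N).trans (by omega)
  nlinarith [sq_nonneg (m - N)]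

end

lemma int_ind (P : Measure (ℕ → A)) [IsProbabilityMeasure P] {S : Set (ℕ → A)} (hS : MeasurableSet S) :
    Integrable (S.indicator (1 : (ℕ → A) → ℝ)) P :=
  (integrable_const (1:ℝ)).indicator hS

lemma S_ge [Fintype A] (P : Measure (ℕ → A)) [IsProbabilityMeasure P]
    (hinv : MeasurePreserving (shift : (ℕ → A) → (ℕ → A)) P P) (n : ℕ) :
    (n * P.real {y | y 0 ∈ DD A}) ^ 2 / 2 ≤ ∑ w : Fin n → A, P.real (Vw w) := by
  set q := P.real {y | y 0 ∈ DD A} with hq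
  set m := n * q with hm
  have i1 : ∀ i : Fin n, Integrable ({y : ℕ → A | y i ∈ DD A}.indicator (1 : (ℕ → A) → ℝ)) P :=
    fun i => int_ind P (meas_coord _ _ DD_meas)
  have i2 : ∀ w : Fin n → A, Integrable ((Vw w).indicator (1 : (ℕ → A) → ℝ)) P :=
    fun w => int_ind P (Vw_meas w)
  have h := integral_mono (μ := P)
    (f := fun y => m * (∑ i : Fin n, {y : ℕ → A | y i ∈ DD A}.indicator (1 : (ℕ → A) → ℝ) y) - m ^ 2 / 2)
    (g := fun y => ∑ w : Fin n → A, (Vw w).indicator (1 : (ℕ → A) → ℝ) y)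
    (((integrable_finsetSum _ fun i _ => i1 i).const_mul m).sub (integrable_const _))
    (integrable_finsetSum _ fun w _ => i2 w) (fun y => sum_words_ge n y m)
  rw [integral_sub ((integrable_finsetSum _ fun i _ => i1 i).const_mul m) (integrable_const _),
    integral_const_mul, integral_finsetSum _ (fun i _ => i1 i), integral_finsetSum _ (fun i _ => i2 i)] at h
  have e : ∀ i : Fin n, P.real {y : ℕ → A | y i ∈ DD A} = q := fun i => by
    rw [hq, Measure.real, Measure.real, coord_inv hinv DD_meas]
  simp only [integral_indicator_one (meas_coord _ _ (DD_meas (A := A))), integral_indicator_one (Vw_meas _), e] at h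
  simp at h
  rw [← hm] at h
  nlinarith

def uu (P : Measure (ℕ → A)) (n : ℕ) (w : Fin n → A) : ℝ := P.real (Vw w)

lemma Hn_eq [Fintype A] (P : Measure (ℕ → A)) (n : ℕ) : Hn P n = HH (uu P) n := by
  unfold Hn HH uu Measure.real
  simp_rw [cylW_eq]

lemma DD_null [Fintype A] (P : Measure (ℕ → A)) [IsProbabilityMeasure P]
    (hinv : MeasurePreserving (shift : (ℕ → A) → (ℕ → A)) P P) (hent : ℝ)
    (hlim : Tendsto (fun n : ℕ => Hn P n / n) atTop (nhds hent))
    (hlt : ∀ a : A, P.real {y | y 0 ∈ measurableAtom a} < 1) :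
    P {y | y 0 ∈ DD A} = 0 := by
  by_contra hne
  have hq : 0 < P.real {y | y 0 ∈ DD A} := ENNReal.toReal_pos hne (measure_ne_top _ _)
  set q := P.real {y | y 0 ∈ DD A}
  have : Nonempty A := by
    obtain ⟨y⟩ := P.nonempty_of_neZero
    exact ⟨y 0⟩
  obtain ⟨a0, ha0⟩ := Finite.exists_max (fun a : A => P.real {y | y 0 ∈ measurableAtom a})
  set t := max (P.real {y | y 0 ∈ measurableAtom a0}) (1/2) with ht
  have ht1 : t < 1 := max_lt (hlt a0) (by norm_num)
  have ht0 : 0 < t := lt_of_lt_of_le (by norm_num) (le_max_right _ _)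
  have hδ : 0 < - Real.log t := by linarith [Real.log_neg ht0 ht1]
  have hu : ∀ n : ℕ, ∀ w : Fin (n+1) → A, -Real.log t * P.real (Vw w) ≤ Real.negMulLog (uu P (n+1) w) := by
    intro n w
    have h1 : uu P (n+1) w ≤ t := by
      refine le_trans ?_ ((ha0 (w 0)).trans (le_max_left _ _))
      exact measureReal_mono (fun y hy => hy 0)
    have h0 : 0 ≤ uu P (n+1) w := measureReal_nonneg
    change _ * uu P (n+1) w ≤ _
    rcases h0.eq_or_lt with h | h
    · rw [← h]; simp
    · have := Real.log_le_log h h1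
      rw [Real.negMulLog]
      nlinarith
  have hH : ∀ n : ℕ, (-Real.log t * q^2/2) * ((n+1 : ℕ):ℝ) ≤ Hn P (n+1) / ((n+1 : ℕ):ℝ) := by
    intro n
    rw [le_div_iff₀ (by positivity), Hn_eq]
    have h1 : -Real.log t * ∑ w : Fin (n+1) → A, P.real (Vw w) ≤ HH (uu P) (n+1) := by
      rw [Finset.mul_sum]; exact Finset.sum_le_sum fun w _ => hu n w
    have h2 := mul_le_mul_of_nonneg_left (S_ge P hinv (n+1)) hδ.le
    refine le_trans (le_of_eq ?_) (h2.trans h1)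
    ring
  have l1 := (tendsto_add_atTop_iff_nat 1).2 hlim
  refine not_tendsto_nhds_of_tendsto_atTop (tendsto_atTop_mono hH ?_) _ l1
  exact ((tendsto_natCast_atTop_atTop (R := ℝ)).comp (tendsto_add_atTop_nat 1)).const_mul_atTop (by positivity)

lemma Vw_snoc {n : ℕ} (w : Fin n → A) (a : A) (y : ℕ → A) :
    (Vw (Fin.snoc w a : Fin (n+1) → A)).indicator (1 : (ℕ → A) → ℝ) y =
      (Vw w).indicator 1 y * (measurableAtom a).indicator (1 : A → ℝ) (y n) := by
  have : y ∈ Vw (Fin.snoc w a : Fin (n+1) → A) ↔ y ∈ Vw w ∧ y n ∈ measurableAtom a := by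
    simp [Vw, Fin.forall_fin_succ']
  classical
  simp only [Set.indicator_apply, this]
  by_cases h1 : y ∈ Vw w <;> by_cases h2 : y n ∈ measurableAtom a <;> simp [h1, h2]

lemma Vw_cons {n : ℕ} (w : Fin n → A) (a : A) (y : ℕ → A) :
    (Vw (Fin.cons a w : Fin (n+1) → A)).indicator (1 : (ℕ → A) → ℝ) y =
      (shift ⁻¹' Vw w).indicator 1 y * (measurableAtom a).indicator (1 : A → ℝ) (y 0) := by
  have : y ∈ Vw (Fin.cons a w : Fin (n+1) → A) ↔ y ∈ shift ⁻¹' Vw w ∧ y 0 ∈ measurableAtom a := by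
    simp [Vw, Fin.forall_fin_succ, shift, and_comm]
  classical
  simp only [Set.indicator_apply, this]
  by_cases h1 : y ∈ shift ⁻¹' Vw w <;> by_cases h2 : y 0 ∈ measurableAtom a <;> simp [h1, h2]

lemma consist_uu [Fintype A] (P : Measure (ℕ → A)) [IsProbabilityMeasure P]
    (hinv : MeasurePreserving (shift : (ℕ → A) → (ℕ → A)) P P)
    (h0 : P {y | y 0 ∈ DD A} = 0) : Consist (uu P) := by
  have hae : ∀ i : ℕ, ∀ᵐ y ∂P, y i ∉ DD A := fun i => by
    rw [ae_iff]; simpa using (coord_inv hinv DD_meas i).trans h0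
  refine ⟨fun n w => measureReal_nonneg, fun n w => ?_, fun n w => ?_⟩
  · unfold uu
    simp_rw [← integral_indicator_one (μ := P) (Vw_meas _)]
    rw [← integral_finsetSum _ (fun a _ => int_ind P (Vw_meas _))]
    refine integral_congr_ae ?_
    filter_upwards [hae n] with y hy
    simp_rw [Vw_snoc]
    rw [← Finset.mul_sum, sum_atom hy, mul_one]
  · unfold uu
    have e : P.real (Vw w) = P.real (shift ⁻¹' Vw w) := by
      rw [Measure.real, Measure.real, hinv.measure_preimage (Vw_meas w).nullMeasurableSet]
    rw [e]
    simp_rw [← integral_indicator_one (μ := P) (Vw_meas _)]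
    rw [← integral_indicator_one (hinv.measurable (Vw_meas w))]
    rw [← integral_finsetSum _ (fun a _ => int_ind P (Vw_meas _))]
    refine integral_congr_ae ?_
    filter_upwards [hae 0] with y hy
    simp_rw [Vw_cons]
    rw [← Finset.mul_sum, sum_atom hy, mul_one]

open Classical in
lemma det_case [Fintype A] (P : Measure (ℕ → A)) [IsProbabilityMeasure P]
    (hinv : MeasurePreserving (shift : (ℕ → A) → (ℕ → A)) P P) (a : A)
    (ha : P {y | y 0 ∈ measurableAtom a} = 1) (n : ℕ) (w : Fin n → A) :
    P (cylW w) = if ∀ i, w i ∈ measurableAtom a then 1 else 0 := by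
  have hm := MeasurableSet.measurableAtom_of_countable a
  have hae : ∀ᵐ y ∂P, ∀ i : ℕ, y i ∈ measurableAtom a := by
    rw [ae_all_iff]
    intro i
    have := (coord_inv hinv hm i).trans ha
    exact (mem_ae_iff_prob_eq_one (meas_coord i _ hm)).2 this
  rw [cylW_eq]
  split_ifs with h
  · rw [← mem_ae_iff_prob_eq_one (Vw_meas w)]
    filter_upwards [hae] with y hy i
    rw [measurableAtom_eq_of_mem (h i)]; exact hy i
  · refine measure_eq_zero_iff_ae_notMem.2 ?_
    filter_upwards [hae] with y hy hV
    refine h fun i => ?_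
    rw [← measurableAtom_eq_of_mem (hy i)]
    exact atom_symm (hV i)

theorem stmt17 [Fintype A] (P : Measure (ℕ → A)) [IsProbabilityMeasure P]
    (hinv : MeasurePreserving (shift : (ℕ → A) → (ℕ → A)) P P)
    (K : ℕ) (hK : 0 < K) (hKeven : Even K)
    (hent : ℝ)
    (hlim : Tendsto (fun n : ℕ => Hn P n / n) atTop (nhds hent)) :
    (((2 / (K : ℝ)) * Hn P (K / 2) + hent) / 2 < Hn P K / K ↔
      ∃ n : ℕ, K / 2 < n ∧ n ≤ K ∧ hent < Hn P n - Hn P (n - 1)) ∧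
    (¬ IsMarkovOrderLe P K →
      ((2 / (K : ℝ)) * Hn P (K / 2) + hent) / 2 < Hn P K / K) := by
  classical
  by_cases hdet : ∃ a : A, P {y | y 0 ∈ measurableAtom a} = 1
  · obtain ⟨a, ha⟩ := hdet
    have hd := det_case P hinv a ha
    have hH : ∀ n, Hn P n = 0 := by
      intro n
      refine Finset.sum_eq_zero fun w _ => ?_
      rw [hd]; split_ifs <;> simp
    have hz : hent = 0 := by
      simp only [hH, zero_div] at hlim
      exact tendsto_nhds_unique hlim tendsto_const_nhds
    refine ⟨by simp [hH, hz], fun hM => absurd ?_ hM⟩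
    intro x n hn
    simp only [cyl_eq, hd]
    have hsh : ∀ k i, (shift^[k] x) i = x (i + k) := by
      intro k
      induction k with
      | zero => intro i; rfl
      | succ k ih =>
        intro i
        rw [Function.iterate_succ_apply']
        show (shift^[k] x) (i+1) = _
        rw [ih]; congr 1; omega
    simp only [hsh, Fin.forall_iff]
    by_cases h1 : ∀ i < n, x i ∈ measurableAtom a
    · have e1 : (∀ i < n + 1, x i ∈ measurableAtom a) ↔ x n ∈ measurableAtom a := by
        refine ⟨fun h => h n (by omega), fun h i hi => ?_⟩
        rcases Nat.lt_succ_iff_lt_or_eq.1 hi with h2 | rfl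
        · exact h1 i h2
        · exact h
      have e2 : (∀ i < K + 1, x (i + (n - K)) ∈ measurableAtom a) ↔ x n ∈ measurableAtom a := by
        refine ⟨fun h => ?_, fun h i hi => e1.2 h _ (by omega)⟩
        have := h K (by omega)
        rwa [Nat.add_sub_cancel' hn] at this
      have e3 : ∀ i < K, x (i + (n - K)) ∈ measurableAtom a := fun i hi => h1 _ (by omega)
      rw [if_pos h1, if_pos e3]
      simp only [e1, e2, one_mul, mul_one]
    · have e1 : ¬ (∀ i < n + 1, x i ∈ measurableAtom a) := fun h => h1 fun i hi => h i (by omega)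
      rw [if_neg h1, if_neg e1]; simp
  · have hlt : ∀ a : A, P.real {y | y 0 ∈ measurableAtom a} < 1 := by
      intro a
      refine lt_of_le_of_ne measureReal_le_one fun h => hdet ⟨a, ?_⟩
      rw [Measure.real] at h
      exact (ENNReal.toReal_eq_one_iff _).1 h
    have hu := consist_uu P hinv (DD_null P hinv hent hlim hlt)
    have hlim' : Tendsto (fun n : ℕ => HH (uu P) n / n) atTop (nhds hent) := by
      simpa only [Hn_eq] using hlim
    have main := incr_main (HH (uu P)) hent (fun n => (HH_step hu n).1) hlim' K hK hKeven
    simp only [Hn_eq]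
    refine ⟨main, fun hM => ?_⟩
    by_contra hcon
    apply hM
    have hle : HH (uu P) K - HH (uu P) (K-1) ≤ hent := by
      by_contra h
      exact hcon (main.2 ⟨K, by omega, le_rfl, not_le.1 h⟩)
    intro x n hn
    have key := markov_abs hu hent hlim' K hK hle x n hn
    simp only [cyl_eq, cylW_eq]
    simp only [uu, Measure.real, ← ENNReal.toReal_mul] at key
    exact (ENNReal.toReal_eq_toReal_iff' (ENNReal.mul_ne_top (measure_ne_top _ _) (measure_ne_top _ _))
      (ENNReal.mul_ne_top (measure_ne_top _ _) (measure_ne_top _ _))).1 key
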